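/- Let A be a separable C*-algebra with T(A) ≠ ∅. For any central sequence (f_n)_n of positive contractions in A, there exists a central sequence (f̃_n)_n of positive contractions in A such that ‖f̃_n f_n − f̃_n‖ → 0 as n → ∞ and lim_{m→∞} liminf_{n→∞} inf_{τ∈T(A)} τ(f̃_n^m) = lim_{m→∞} liminf_{n→∞} inf_{τ∈T(A)} τ(f_n^m). -/

import Mathlib

open Filter Topology

section NonUnitalDefs

variable {A : Type*} [NonUnitalCStarAlgebra A]

/-- A tracial state on a (not necessarily unital) C*-algebra: a norm-one positive linear
functional satisfying the trace property `τ(ab) = τ(ba)`. -/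
def IsTracialState (τ : A →L[ℂ] ℂ) : Prop :=
  ‖τ‖ = 1 ∧ (∀ a : A, 0 ≤ (τ (star a * a)).re ∧ (τ (star a * a)).im = 0) ∧
    ∀ a b : A, τ (a * b) = τ (b * a)

end NonUnitalDefs

/-- The set `T(A)` of tracial states, as a type. -/
abbrev TState (A : Type*) [NonUnitalCStarAlgebra A] := {τ : A →L[ℂ] ℂ // IsTracialState τ}

section NonUnitalDefs2

variable {A : Type*} [NonUnitalCStarAlgebra A]

/-- `inf_{τ ∈ T(A)} g τ`. -/
noncomputable def trInf (g : TState A → ℝ) : ℝ := ⨅ τ, g τ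

/-- A (bounded) central sequence in `A`. -/
def IsCentralSeq (x : ℕ → A) : Prop :=
  (∃ C : ℝ, ∀ n, ‖x n‖ ≤ C) ∧ ∀ a : A, Tendsto (fun n => ‖x n * a - a * x n‖) atTop (𝓝 0)

/-- Positivity in a C*-algebra, phrased algebraically: `x = b* b` for some `b`. -/
def IsPos (x : A) : Prop := ∃ b : A, x = star b * b

/-- A positive contraction. -/
def IsPosContraction (x : A) : Prop := IsPos x ∧ ‖x‖ ≤ 1

/-- `selfPow x m = x ^ (m + 1)`, the powers of `x` available without a unit. -/
def selfPow (x : A) : ℕ → A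
  | 0 => x
  | m + 1 => selfPow x m * x

end NonUnitalDefs2


lemma aux_real (t : ℝ) (h0 : 0 ≤ t) (h1 : t ≤ 1) (k : ℕ) :
    ((k : ℝ) + 1) * (t ^ k * (1 - t)) ≤ 1 - t ^ (k + 1) := by
  induction k with
  | zero => simp
  | succ k ih =>
    have h2 : t ^ (k + 1) ≤ 1 := pow_le_one₀ h0 h1
    have h3 := mul_le_mul_of_nonneg_left ih h0
    have h4 := mul_nonneg (sub_nonneg.2 h1) (sub_nonneg.2 h2)
    push_cast
    simp only [pow_succ] at *
    nlinarith

section aux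
variable {A : Type*} [NonUnitalCStarAlgebra A]

lemma selfPow_mul (x : A) (m n : ℕ) : selfPow x m * selfPow x n = selfPow x (m + n + 1) := by
  induction n with
  | zero => rfl
  | succ n ih =>
    show selfPow x m * (selfPow x n * x) = selfPow x (m + n + 1) * x
    rw [← mul_assoc, ih]

lemma selfPow_selfPow (x : A) (l m : ℕ) :
    selfPow (selfPow x l) m = selfPow x (l * m + l + m) := by
  induction m with
  | zero => simp [selfPow]
  | succ m ih =>
    show selfPow (selfPow x l) m * selfPow x l = _
    rw [ih, selfPow_mul]
    congr 1
    ring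

lemma selfPow_sq (s : A) (k : ℕ) : selfPow (s * s) k = selfPow s k * selfPow s k := by
  have h := selfPow_selfPow s 1 k
  have : selfPow s 1 = s * s := rfl
  rw [this] at h
  rw [h, selfPow_mul]
  congr 1
  ring

lemma star_selfPow (s : A) (hs : star s = s) (k : ℕ) : star (selfPow s k) = selfPow s k := by
  induction k with
  | zero => exact hs
  | succ k ih =>
    show star (selfPow s k * s) = selfPow s k * s
    rw [star_mul, hs, ih]
    have := selfPow_mul s 0 k
    rw [zero_add] at this
    exact this

lemma IsPos.exists_sqrt {x : A} (hx : IsPos x) : ∃ s : A, star s = s ∧ x = s * s := by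
  letI := CStarAlgebra.spectralOrder A
  haveI := CStarAlgebra.spectralOrderedRing A
  obtain ⟨b, rfl⟩ := hx
  have h0 : 0 ≤ star b * b := star_mul_self_nonneg b
  refine ⟨CFC.sqrt (star b * b), ?_, ?_⟩
  · exact (IsSelfAdjoint.of_nonneg (CFC.sqrt_nonneg _)).star_eq
  · exact (CFC.sqrt_mul_sqrt_self _ h0).symm

lemma isPos_conj_sub {x : A} (hx : IsPosContraction x) (k : ℕ) :
    ∃ d : A, selfPow x k - selfPow x (k + 1) = star d * d := by
  letI := CStarAlgebra.spectralOrder A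
  haveI := CStarAlgebra.spectralOrderedRing A
  obtain ⟨s, hs, rfl⟩ := hx.1.exists_sqrt
  have hsa : IsSelfAdjoint (s * s) := by
    rw [IsSelfAdjoint, star_mul, hs]
  have h := CStarAlgebra.star_left_conjugate_le_norm_smul (a := selfPow s k) (b := s * s) hsa
  rw [star_selfPow s hs] at h
  have e : selfPow s k * (s * s) * selfPow s k = selfPow (s * s) (k + 1) := by
    have h1 : s * s = selfPow s 1 := rfl
    rw [selfPow_sq, h1, selfPow_mul, selfPow_mul, selfPow_mul]
    congr 1
    ring
  rw [e, ← selfPow_sq] at h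
  have hp : 0 ≤ selfPow (s * s) k := by
    rw [selfPow_sq]
    nth_rewrite 1 [← star_selfPow s hs]
    exact star_mul_self_nonneg _
  have h2 : ‖s * s‖ • selfPow (s * s) k ≤ selfPow (s * s) k := by
    have : 0 ≤ (1 - ‖s * s‖) • selfPow (s * s) k := smul_nonneg (sub_nonneg.2 hx.2) hp
    rw [sub_smul, one_smul] at this
    exact sub_nonneg.1 this
  have h3 := sub_nonneg.2 (h.trans h2)
  exact CStarAlgebra.nonneg_iff_eq_star_mul_self.1 h3

lemma isPos_selfPow {x : A} (hx : IsPos x) (k : ℕ) : IsPos (selfPow x k) := by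
  obtain ⟨s, hs, rfl⟩ := hx.exists_sqrt
  exact ⟨selfPow s k, by rw [star_selfPow s hs, selfPow_sq]⟩

lemma norm_selfPow {x : A} (hx : ‖x‖ ≤ 1) (k : ℕ) : ‖selfPow x k‖ ≤ 1 := by
  induction k with
  | zero => exact hx
  | succ k ih => exact (norm_mul_le _ _).trans (mul_le_one₀ ih (norm_nonneg _) hx)

lemma comm_selfPow {x : A} (hx : ‖x‖ ≤ 1) (a : A) (k : ℕ) :
    ‖selfPow x k * a - a * selfPow x k‖ ≤ (k + 1) * ‖x * a - a * x‖ := by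
  induction k with
  | zero => simp [selfPow]
  | succ k ih =>
    have e : selfPow x (k + 1) * a - a * selfPow x (k + 1) =
        selfPow x k * (x * a - a * x) + (selfPow x k * a - a * selfPow x k) * x := by
      simp only [selfPow, mul_sub, sub_mul, mul_assoc]
      abel
    rw [e]
    have h1 : ‖selfPow x k * (x * a - a * x)‖ ≤ 1 * ‖x * a - a * x‖ :=
      (norm_mul_le _ _).trans (mul_le_mul_of_nonneg_right (norm_selfPow hx k) (norm_nonneg _))
    have h2 : ‖(selfPow x k * a - a * selfPow x k) * x‖ ≤ ‖selfPow x k * a - a * selfPow x k‖ * 1 :=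
      (norm_mul_le _ _).trans (mul_le_mul_of_nonneg_left hx (norm_nonneg _))
    have := norm_add_le (selfPow x k * (x * a - a * x)) ((selfPow x k * a - a * selfPow x k) * x)
    push_cast
    linarith

lemma selfPow_cfc {x : A} (hx : IsSelfAdjoint x) (k : ℕ) :
    selfPow x k = cfcₙ (fun t : ℝ => t ^ (k + 1)) x := by
  induction k with
  | zero => simp [selfPow, cfcₙ_id' ℝ x hx]
  | succ k ih =>
    show selfPow x k * x = _
    nth_rewrite 2 [← cfcₙ_id' ℝ x hx]
    rw [ih, ← cfcₙ_mul _ _ x]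
    simp only [← pow_succ]

lemma norm_selfPow_sub {x : A} (hx : IsPosContraction x) (k : ℕ) :
    ‖selfPow x k * x - selfPow x k‖ ≤ 1 / ((k : ℝ) + 1) := by
  letI := CStarAlgebra.spectralOrder A
  haveI := CStarAlgebra.spectralOrderedRing A
  have h0 : 0 ≤ x := by
    obtain ⟨b, rfl⟩ := hx.1
    exact star_mul_self_nonneg b
  have hsa : IsSelfAdjoint x := IsSelfAdjoint.of_nonneg h0
  have e : selfPow x k * x - selfPow x k =
      cfcₙ (fun t : ℝ => t ^ (k + 1 + 1) - t ^ (k + 1)) x := by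
    show selfPow x (k + 1) - selfPow x k = _
    rw [selfPow_cfc hsa, selfPow_cfc hsa, ← cfcₙ_sub _ _ x]
  rw [e]
  refine norm_cfcₙ_le ?_
  intro t ht
  have ht0 : 0 ≤ t := quasispectrum_nonneg_of_nonneg x h0 t ht
  have ht1 : t ≤ 1 := by
    have := NonUnitalIsometricContinuousFunctionalCalculus.norm_quasispectrum_le x ht hsa
    exact (le_abs_self t).trans (this.trans hx.2)
  have h := aux_real t ht0 ht1 k
  have h4 : 0 ≤ t ^ k * (1 - t) := mul_nonneg (pow_nonneg ht0 k) (sub_nonneg.2 ht1)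
  have h5 : t ^ (k + 1 + 1) - t ^ (k + 1) = - (t * (t ^ k * (1 - t))) := by ring
  rw [h5, norm_neg, Real.norm_of_nonneg (mul_nonneg ht0 h4), le_div_iff₀ (by positivity)]
  have h6 : 0 ≤ t ^ (k + 1) := pow_nonneg ht0 _
  have h7 : t * (t ^ k * (1 - t)) ≤ 1 * (t ^ k * (1 - t)) := mul_le_mul_of_nonneg_right ht1 h4
  have h8 := mul_le_mul_of_nonneg_right h7 (show (0 : ℝ) ≤ k + 1 by positivity)
  linarith

lemma trInf_le_one [Nonempty (TState A)] {x : A} (hp : IsPos x) (hx : ‖x‖ ≤ 1) :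
    0 ≤ trInf (fun τ : TState A => (τ.1 x).re) ∧ trInf (fun τ : TState A => (τ.1 x).re) ≤ 1 := by
  obtain ⟨b, rfl⟩ := hp
  have hnn : ∀ τ : TState A, 0 ≤ (τ.1 (star b * b)).re := fun τ => (τ.2.2.1 b).1
  refine ⟨le_ciInf hnn, ?_⟩
  obtain ⟨τ⟩ := ‹Nonempty (TState A)›
  refine (ciInf_le ⟨0, by rintro _ ⟨σ, rfl⟩; exact hnn σ⟩ τ).trans ?_
  refine (Complex.re_le_norm _).trans ((τ.1.le_opNorm _).trans ?_)
  rw [τ.2.1, one_mul]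
  exact hx

lemma trInf_antitone [Nonempty (TState A)] {x : A} (hx : IsPosContraction x) :
    Antitone (fun k => trInf (fun τ : TState A => (τ.1 (selfPow x k)).re)) := by
  refine antitone_nat_of_succ_le fun k => ?_
  refine ciInf_mono ?_ fun τ => ?_
  · refine ⟨0, ?_⟩
    rintro _ ⟨σ, rfl⟩
    obtain ⟨b, hb⟩ := isPos_selfPow hx.1 (k + 1)
    simp only [hb]
    exact (σ.2.2.1 b).1
  · obtain ⟨d, hd⟩ := isPos_conj_sub hx k
    have := (τ.2.2.1 d).1
    rw [← hd, map_sub, Complex.sub_re] at this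
    linarith

end aux

lemma diag_seq (P : ℕ → ℕ → Prop) (h : ∀ l, ∀ᶠ n in atTop, P l n) :
    ∃ l : ℕ → ℕ, Tendsto l atTop atTop ∧ ∀ᶠ n in atTop, P (l n) n := by
  classical
  refine ⟨fun n => Nat.findGreatest (fun l => P l n) n, ?_, ?_⟩
  · refine tendsto_atTop.2 fun b => ?_
    filter_upwards [h b, eventually_ge_atTop b] with n h1 h2
    exact Nat.le_findGreatest h2 h1
  · filter_upwards [h 0] with n h1
    exact Nat.findGreatest_spec (P := fun l => P l n) (Nat.zero_le n) h1

/-- Lemma 2.3 of Matui–Sato: if `A` is a separable C*-algebra with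
`T(A) ≠ ∅`, then for every central sequence `(f_n)` of positive contractions there is a
central sequence `(f̃_n)` of positive contractions with `‖f̃_n f_n - f̃_n‖ → 0` and
`lim_m liminf_n inf_{τ ∈ T(A)} τ(f̃_n^m) = lim_m liminf_n inf_{τ ∈ T(A)} τ(f_n^m)`
(both limits over `m` exist and share a common value `c`; here `selfPow x m = x^(m+1)`). -/
theorem lemma_fn (A : Type*) [NonUnitalCStarAlgebra A] [TopologicalSpace.SeparableSpace A]
    (htr : Nonempty (TState A))
    (f : ℕ → A) (hfc : IsCentralSeq f) (hfpc : ∀ n, IsPosContraction (f n)) :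
    ∃ ftil : ℕ → A, IsCentralSeq ftil ∧ (∀ n, IsPosContraction (ftil n)) ∧
      Tendsto (fun n => ‖ftil n * f n - ftil n‖) atTop (𝓝 0) ∧
      ∃ c : ℝ,
        Tendsto (fun m : ℕ =>
          liminf (fun n => trInf fun τ : TState A => (τ.1 (selfPow (ftil n) m)).re) atTop)
          atTop (𝓝 c) ∧
        Tendsto (fun m : ℕ =>
          liminf (fun n => trInf fun τ : TState A => (τ.1 (selfPow (f n) m)).re) atTop)
          atTop (𝓝 c) := by
  haveI := htr
  obtain ⟨a, ha⟩ := TopologicalSpace.exists_dense_seq A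
  set g : ℕ → ℕ → ℝ := fun k n => trInf fun τ : TState A => (τ.1 (selfPow (f n) k)).re with hg
  have g01 : ∀ k n, 0 ≤ g k n ∧ g k n ≤ 1 := fun k n =>
    trInf_le_one (isPos_selfPow (hfpc n).1 k) (norm_selfPow (hfpc n).2 k)
  have ganti : ∀ n, Antitone (fun k => g k n) := fun n => trInf_antitone (hfpc n)
  have bb : ∀ u : ℕ → ℕ, IsBoundedUnder (· ≥ ·) atTop (fun n => g (u n) n) := fun u =>
    isBoundedUnder_of ⟨0, fun n => (g01 _ n).1⟩
  have cb : ∀ u : ℕ → ℕ, IsCoboundedUnder (· ≥ ·) atTop (fun n => g (u n) n) := fun u =>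
    (isBoundedUnder_of ⟨1, fun n => (g01 _ n).2⟩ :
      IsBoundedUnder (· ≤ ·) atTop (fun n => g (u n) n)).isCoboundedUnder_ge
  set L : ℕ → ℝ := fun k => liminf (fun n => g k n) atTop with hL
  have Lanti : Antitone L := fun i j hij =>
    liminf_le_liminf (Eventually.of_forall fun n => ganti n hij)
      (bb fun _ => j) (cb fun _ => i)
  have L0 : ∀ k, 0 ≤ L k := fun k =>
    le_liminf_of_le (cb fun _ => k) (Eventually.of_forall fun n => (g01 k n).1)
  have Lbdd : BddBelow (Set.range L) := ⟨0, by rintro _ ⟨k, rfl⟩; exact L0 k⟩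
  set c : ℝ := ⨅ k, L k with hc
  have hP : ∀ l : ℕ, ∀ᶠ n in atTop,
      (∀ k ∈ Finset.range l, ((l : ℝ) + 1) * ‖f n * a k - a k * f n‖ < 1 / ((l : ℝ) + 1)) ∧
        c - 1 / ((l : ℝ) + 1) < g (l * l + l + l) n := by
    intro l
    have hpos : (0 : ℝ) < 1 / ((l : ℝ) + 1) := by positivity
    refine Eventually.and ?_ ?_
    · refine (Filter.eventually_all_finset _).2 fun k _ => ?_
      have h1 := (hfc.2 (a k)).const_mul ((l : ℝ) + 1)
      rw [mul_zero] at h1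
      exact h1.eventually_lt_const hpos
    · refine eventually_lt_of_lt_liminf ?_ (bb fun _ => l * l + l + l)
      have : c ≤ L (l * l + l + l) := ciInf_le Lbdd _
      exact lt_of_lt_of_le (by linarith) this
  obtain ⟨l, hl, hlP⟩ := diag_seq _ hP
  have hinv : Tendsto (fun n => 1 / ((l n : ℝ) + 1)) atTop (𝓝 0) :=
    tendsto_one_div_add_atTop_nhds_zero_nat.comp hl
  refine ⟨fun n => selfPow (f n) (l n), ⟨⟨1, fun n => norm_selfPow (hfpc n).2 _⟩, ?_⟩,
    fun n => ⟨isPos_selfPow (hfpc n).1 _, norm_selfPow (hfpc n).2 _⟩, ?_, c, ?_, ?_⟩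
  · intro x
    rw [Metric.tendsto_nhds]
    intro ε hε
    obtain ⟨k, hk⟩ := ha.exists_dist_lt x (show (0 : ℝ) < ε / 4 by positivity)
    rw [dist_eq_norm] at hk
    have hε2 : (0 : ℝ) < ε / 2 := by positivity
    filter_upwards [hlP, hl.eventually_gt_atTop k, hinv.eventually_lt_const hε2] with n h1 h2 h3
    rw [Real.dist_eq, sub_zero, abs_norm]
    have h4 := h1.1 k (Finset.mem_range.2 h2)
    have h5 := comm_selfPow (hfpc n).2 (a k) (l n)
    have hn := norm_selfPow (hfpc n).2 (l n)
    set y := selfPow (f n) (l n)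
    have e : y * x - x * y = (y * a k - a k * y) + (y * (x - a k) - (x - a k) * y) := by
      simp only [mul_sub, sub_mul]
      abel
    rw [e]
    have h6 := norm_add_le (y * a k - a k * y) (y * (x - a k) - (x - a k) * y)
    have h7 := norm_sub_le (y * (x - a k)) ((x - a k) * y)
    have h8 : ‖y * (x - a k)‖ ≤ 1 * ‖x - a k‖ :=
      (norm_mul_le _ _).trans (mul_le_mul_of_nonneg_right hn (norm_nonneg _))
    have h9 : ‖(x - a k) * y‖ ≤ ‖x - a k‖ * 1 :=
      (norm_mul_le _ _).trans (mul_le_mul_of_nonneg_left hn (norm_nonneg _))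
    linarith
  · exact squeeze_zero (fun _ => norm_nonneg _) (fun n => norm_selfPow_sub (hfpc n) (l n)) hinv
  · refine tendsto_const_nhds.congr fun m => ?_
    simp only [selfPow_selfPow]
    change c = liminf (fun n => g (l n * m + l n + m) n) atTop
    refine le_antisymm ?_ ?_
    · refine le_of_forall_sub_le fun ε hε => ?_
      refine le_liminf_of_le (cb fun n => l n * m + l n + m) ?_
      filter_upwards [hlP, hl.eventually_ge_atTop m, hinv.eventually_lt_const hε] with n h1 h2 h3
      have h4 : l n * m + l n + m ≤ l n * l n + l n + l n := by gcongr
      have h5 := ganti n h4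
      have h6 := h1.2
      simp only at h5
      linarith
    · refine le_ciInf fun k => ?_
      refine liminf_le_liminf ?_ (bb fun n => l n * m + l n + m) (cb fun _ => k)
      filter_upwards [hl.eventually_ge_atTop k] with n h1
      exact ganti n (by nlinarith [Nat.zero_le (l n * m)])
  · exact tendsto_atTop_ciInf Lanti Lbdd
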